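/- arXiv:0706.0075 — 4 statements merged into one kernel-verified Lean document; each statement's English description precedes it below -/
import Mathlib

section
/- Let L be a Lie algebra over a field F, let g, g₁, g₂ ∈ L, and let λ, μ₁, μ₂ ∈ F be pairwise distinct. Then (λ−μ₂)⁻¹ • ( (λ−μ₁)⁻¹ • ⁅⁅g,g₁⁆,g₂⁆ + (μ₂−μ₁)⁻¹ • ⁅g,⁅g₂,g₁⁆⁆ ) = (λ−μ₁)⁻¹ • ( (λ−μ₂)⁻¹ • ⁅⁅g,g₂⁆,g₁⁆ + (μ₁−μ₂)⁻¹ • ⁅g,⁅g₁,g₂⁆⁆ ). -/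
theorem stmt_1 {F : Type*} [Field F] {L : Type*} [LieRing L] [LieAlgebra F L]
    (g g₁ g₂ : L) (lam μ₁ μ₂ : F)
    (h₁ : lam ≠ μ₁) (h₂ : lam ≠ μ₂) (h₃ : μ₁ ≠ μ₂) :
    (lam - μ₂)⁻¹ •
        ((lam - μ₁)⁻¹ • ⁅⁅g, g₁⁆, g₂⁆ + (μ₂ - μ₁)⁻¹ • ⁅g, ⁅g₂, g₁⁆⁆) =
      (lam - μ₁)⁻¹ •
        ((lam - μ₂)⁻¹ • ⁅⁅g, g₂⁆, g₁⁆ + (μ₁ - μ₂)⁻¹ • ⁅g, ⁅g₁, g₂⁆⁆) := by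
  have hX : ⁅⁅g, g₁⁆, g₂⁆ = ⁅g, ⁅g₁, g₂⁆⁆ + ⁅⁅g, g₂⁆, g₁⁆ := by
    rw [leibniz_lie g g₁ g₂, ← lie_skew g₁ ⁅g, g₂⁆]
    abel
  have hZ : ⁅g, ⁅g₂, g₁⁆⁆ = -⁅g, ⁅g₁, g₂⁆⁆ := by
    rw [← lie_skew g₂ g₁, lie_neg]
  rw [hX, hZ]
  have e₁ : lam - μ₁ ≠ 0 := sub_ne_zero.mpr h₁
  have e₂ : lam - μ₂ ≠ 0 := sub_ne_zero.mpr h₂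
  have e₃ : μ₁ - μ₂ ≠ 0 := sub_ne_zero.mpr h₃
  have hd : (μ₂ - μ₁)⁻¹ = -(μ₁ - μ₂)⁻¹ := by
    rw [← inv_neg, neg_sub]
  have key : (lam - μ₁)⁻¹ * (μ₁ - μ₂)⁻¹ =
      (lam - μ₂)⁻¹ * (lam - μ₁)⁻¹ + (lam - μ₂)⁻¹ * (μ₁ - μ₂)⁻¹ := by
    field_simp
    ring
  rw [hd]
  generalize ⁅g, ⁅g₁, g₂⁆⁆ = Z
  generalize ⁅⁅g, g₂⁆, g₁⁆ = Y
  simp only [smul_add, smul_smul, key, add_smul, neg_smul, smul_neg, neg_neg]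
  rw [mul_comm (lam - μ₁)⁻¹ (lam - μ₂)⁻¹]
  abel
end

section
/- Fix μ ∈ ℝ. Let a, b, c : ℝ × ℝ → ℝ (arguments (τ, λ)) be differentiable in τ, and for functions f, g of this kind define {f,g}(τ,λ) = ( f(τ,μ)·g(τ,λ) − g(τ,μ)·f(τ,λ) ) / (λ−μ) for λ ≠ μ. Suppose that for all τ and all λ ≠ μ: ∂_τ a = 2{a,b}, ∂_τ c = 2{b,c}, ∂_τ b = {a,c}. Then for all τ and all λ ≠ μ, ∂_τ ( b(τ,λ)² − a(τ,λ)·c(τ,λ) ) = 0. -/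
/-- The bracket `{f,g}(τ,λ) = (f(τ,μ)g(τ,λ) − g(τ,μ)f(τ,λ))/(λ−μ)`. -/
noncomputable def pbr (μ : ℝ) (f g : ℝ × ℝ → ℝ) (τ l : ℝ) : ℝ :=
  (f (τ, μ) * g (τ, l) - g (τ, μ) * f (τ, l)) / (l - μ)

theorem stmt_3 (μ : ℝ) (a b c : ℝ × ℝ → ℝ)
    (ha : ∀ l : ℝ, Differentiable ℝ fun τ => a (τ, l))
    (hb : ∀ l : ℝ, Differentiable ℝ fun τ => b (τ, l))
    (hc : ∀ l : ℝ, Differentiable ℝ fun τ => c (τ, l))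
    (ha' : ∀ (τ l : ℝ), l ≠ μ →
      deriv (fun t => a (t, l)) τ = 2 * pbr μ a b τ l)
    (hc' : ∀ (τ l : ℝ), l ≠ μ →
      deriv (fun t => c (t, l)) τ = 2 * pbr μ b c τ l)
    (hb' : ∀ (τ l : ℝ), l ≠ μ →
      deriv (fun t => b (t, l)) τ = pbr μ a c τ l) :
    ∀ (τ l : ℝ), l ≠ μ →
      deriv (fun t => b (t, l) ^ 2 - a (t, l) * c (t, l)) τ = 0 := by
  intro τ l hl
  have h1 := (ha l τ).hasDerivAt
  have h2 := (hb l τ).hasDerivAt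
  have h3 := (hc l τ).hasDerivAt
  rw [ha' τ l hl] at h1
  rw [hb' τ l hl] at h2
  rw [hc' τ l hl] at h3
  have h := ((h2.fun_pow 2).fun_sub (h1.fun_mul h3)).deriv
  rw [h]
  simp only [pbr]
  push_cast
  ring
end

section
/- Let n ∈ ℕ, let μ₁ ≠ μ₂ be real numbers, and let S : ℝ × ℝ → Matrix (Fin n) (Fin n) ℝ be twice continuously differentiable (entrywise) in its two arguments (τ₁, τ₂), satisfying (μ₁−μ₂) · ∂_{τ₁}∂_{τ₂} S = (∂_{τ₁}S)·(∂_{τ₂}S) − (∂_{τ₂}S)·(∂_{τ₁}S) everywhere. Then ∂_{τ₂} ( trace( (∂_{τ₁}S) · (∂_{τ₁}S) ) ) = 0 everywhere. -/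
open Matrix

theorem aux_mixed (f : ℝ × ℝ → ℝ) (hf : ContDiff ℝ 2 f) (x y : ℝ) :
    HasDerivAt (fun t => deriv (fun s => f (s, t)) x)
      (deriv (fun s => deriv (fun t => f (s, t)) y) x) y := by
  have hd : Differentiable ℝ f := hf.differentiable (by norm_num)
  have hd2 : Differentiable ℝ (fderiv ℝ f) :=
    (hf.fderiv_right (m := 1) (by norm_num)).differentiable (by norm_num)
  have c1 : ∀ s t : ℝ, HasDerivAt (fun s : ℝ => (s, t)) ((1 : ℝ), (0 : ℝ)) s := fun s t =>
    (hasDerivAt_id s).prodMk (hasDerivAt_const s t)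
  have c2 : ∀ s t : ℝ, HasDerivAt (fun t : ℝ => (s, t)) ((0 : ℝ), (1 : ℝ)) t := fun s t =>
    (hasDerivAt_const t s).prodMk (hasDerivAt_id t)
  have e1 : ∀ s t : ℝ, deriv (fun s => f (s, t)) s = fderiv ℝ f (s, t) (1, 0) := fun s t =>
    ((hd (s, t)).hasFDerivAt.comp_hasDerivAt s (c1 s t)).deriv
  have e2 : ∀ s t : ℝ, deriv (fun t => f (s, t)) t = fderiv ℝ f (s, t) (0, 1) := fun s t =>
    ((hd (s, t)).hasFDerivAt.comp_hasDerivAt t (c2 s t)).deriv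
  have g1 : HasDerivAt (fun s => fderiv ℝ f (s, y)) (fderiv ℝ (fderiv ℝ f) (x, y) (1, 0)) x :=
    (hd2 (x, y)).hasFDerivAt.comp_hasDerivAt x (c1 x y)
  have g2 : HasDerivAt (fun t => fderiv ℝ f (x, t)) (fderiv ℝ (fderiv ℝ f) (x, y) (0, 1)) y :=
    (hd2 (x, y)).hasFDerivAt.comp_hasDerivAt y (c2 x y)
  have h1 := g1.clm_apply (hasDerivAt_const x ((0 : ℝ), (1 : ℝ)))
  have h2 := g2.clm_apply (hasDerivAt_const y ((1 : ℝ), (0 : ℝ)))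
  simp only [map_zero, add_zero] at h1 h2
  have sym := second_derivative_symmetric (fun z => (hd z).hasFDerivAt)
    (hd2 (x, y)).hasFDerivAt ((0 : ℝ), (1 : ℝ)) ((1 : ℝ), (0 : ℝ))
  simp only [e1, e2]
  rw [h1.deriv, ← sym]
  exact h2

theorem stmt_4 (n : ℕ) (μ₁ μ₂ : ℝ) (hμ : μ₁ ≠ μ₂)
    (S : ℝ × ℝ → Matrix (Fin n) (Fin n) ℝ)
    (hS : ∀ i j, ContDiff ℝ 2 fun p => S p i j)
    (heq : ∀ p : ℝ × ℝ,
      (μ₁ - μ₂) •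
          (Matrix.of fun i j =>
            deriv (fun s => deriv (fun t => S (s, t) i j) p.2) p.1) =
        (Matrix.of fun i j => deriv (fun s => S (s, p.2) i j) p.1) *
            (Matrix.of fun i j => deriv (fun t => S (p.1, t) i j) p.2) -
          (Matrix.of fun i j => deriv (fun t => S (p.1, t) i j) p.2) *
            (Matrix.of fun i j => deriv (fun s => S (s, p.2) i j) p.1)) :
    ∀ p : ℝ × ℝ,
      deriv (fun t =>
        (((Matrix.of fun i j => deriv (fun s => S (s, t) i j) p.1) *
            (Matrix.of fun i j => deriv (fun s => S (s, t) i j) p.1)).trace)) p.2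
        = 0 := by
  intro p
  have H := heq p
  set A : Matrix (Fin n) (Fin n) ℝ := Matrix.of fun i j => deriv (fun s => S (s, p.2) i j) p.1
    with hA
  set B : Matrix (Fin n) (Fin n) ℝ := Matrix.of fun i j => deriv (fun t => S (p.1, t) i j) p.2
  set C : Matrix (Fin n) (Fin n) ℝ := Matrix.of fun i j =>
    deriv (fun s => deriv (fun t => S (s, t) i j) p.2) p.1 with hC
  have hd : ∀ i j, HasDerivAt (fun t => deriv (fun s => S (s, t) i j) p.1) (C i j) p.2 :=
    fun i j => aux_mixed (fun q => S q i j) (hS i j) p.1 p.2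
  have key : HasDerivAt (fun t =>
        (((Matrix.of fun i j => deriv (fun s => S (s, t) i j) p.1) *
            (Matrix.of fun i j => deriv (fun s => S (s, t) i j) p.1)).trace))
        ((C * A).trace + (A * C).trace) p.2 := by
    simp only [Matrix.trace, Matrix.diag, Matrix.mul_apply, Matrix.of_apply,
      ← Finset.sum_add_distrib]
    exact HasDerivAt.fun_sum fun i _ => HasDerivAt.fun_sum fun j _ => (hd i j).mul (hd j i)
  rw [key.deriv, Matrix.trace_mul_comm A C]
  have h0 : (μ₁ - μ₂) * (C * A).trace = 0 := by
    rw [← smul_eq_mul, ← Matrix.trace_smul, ← Matrix.smul_mul, H, Matrix.sub_mul,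
      Matrix.trace_sub, Matrix.mul_assoc, Matrix.trace_mul_comm A (B * A), sub_self]
  have h1 := (mul_eq_zero.mp h0).resolve_left (sub_ne_zero.mpr hμ)
  rw [h1, add_zero]
end

section
/- Let A, B : ℝ³ → ℝ be continuously differentiable and f : ℝ³ → ℝ be twice continuously differentiable, with coordinates (t, s, x). Define the first-order operators L₁f = ∂_t f − A·∂_x f and L₂f = ∂_s f − B·∂_x f. Then at every point, L₁(L₂ f) − L₂(L₁ f) = ( ∂_s A − ∂_t B + A·∂_x B − B·∂_x A ) · ∂_x f. In particular, if ∂_t B − ∂_s A = A·∂_x B − B·∂_x A then the operators L₁ and L₂ commute on all twice continuously differentiable f. -/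
/-- Partial derivative in the first coordinate `t` of `(t,s,x)`. -/
noncomputable def Dt (f : ℝ × ℝ × ℝ → ℝ) (p : ℝ × ℝ × ℝ) : ℝ :=
  deriv (fun t => f (t, p.2.1, p.2.2)) p.1

/-- Partial derivative in the second coordinate `s` of `(t,s,x)`. -/
noncomputable def Ds (f : ℝ × ℝ × ℝ → ℝ) (p : ℝ × ℝ × ℝ) : ℝ :=
  deriv (fun s => f (p.1, s, p.2.2)) p.2.1

/-- Partial derivative in the third coordinate `x` of `(t,s,x)`. -/
noncomputable def Dx (f : ℝ × ℝ × ℝ → ℝ) (p : ℝ × ℝ × ℝ) : ℝ :=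
  deriv (fun x => f (p.1, p.2.1, x)) p.2.2

theorem Dt_eq {f : ℝ × ℝ × ℝ → ℝ} {p : ℝ × ℝ × ℝ} (hf : DifferentiableAt ℝ f p) :
    Dt f p = fderiv ℝ f p (1, 0, 0) := by
  have h : HasDerivAt (fun t : ℝ => ((t, p.2.1, p.2.2) : ℝ × ℝ × ℝ)) (1, 0, 0) p.1 :=
    (hasDerivAt_id p.1).prodMk ((hasDerivAt_const _ _).prodMk (hasDerivAt_const _ _))
  exact (HasFDerivAt.comp_hasDerivAt (l := f) p.1 hf.hasFDerivAt h).deriv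

theorem Ds_eq {f : ℝ × ℝ × ℝ → ℝ} {p : ℝ × ℝ × ℝ} (hf : DifferentiableAt ℝ f p) :
    Ds f p = fderiv ℝ f p (0, 1, 0) := by
  have h : HasDerivAt (fun t : ℝ => ((p.1, t, p.2.2) : ℝ × ℝ × ℝ)) (0, 1, 0) p.2.1 :=
    (hasDerivAt_const _ _).prodMk ((hasDerivAt_id p.2.1).prodMk (hasDerivAt_const _ _))
  exact (HasFDerivAt.comp_hasDerivAt (l := f) p.2.1 hf.hasFDerivAt h).deriv

theorem Dx_eq {f : ℝ × ℝ × ℝ → ℝ} {p : ℝ × ℝ × ℝ} (hf : DifferentiableAt ℝ f p) :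
    Dx f p = fderiv ℝ f p (0, 0, 1) := by
  have h : HasDerivAt (fun t : ℝ => ((p.1, p.2.1, t) : ℝ × ℝ × ℝ)) (0, 0, 1) p.2.2 :=
    (hasDerivAt_const _ _).prodMk ((hasDerivAt_const _ _).prodMk (hasDerivAt_id p.2.2))
  exact (HasFDerivAt.comp_hasDerivAt (l := f) p.2.2 hf.hasFDerivAt h).deriv

theorem fderiv_op {C f : ℝ × ℝ × ℝ → ℝ} (hC : ContDiff ℝ 1 C) (hf : ContDiff ℝ 2 f)
    (u v : ℝ × ℝ × ℝ) (p : ℝ × ℝ × ℝ) :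
    HasFDerivAt (fun q => fderiv ℝ f q u - C q * fderiv ℝ f q v)
      ((fderiv ℝ (fderiv ℝ f) p).flip u - (C p • (fderiv ℝ (fderiv ℝ f) p).flip v
        + fderiv ℝ f p v • fderiv ℝ C p)) p := by
  have h1 : HasFDerivAt (fderiv ℝ f) (fderiv ℝ (fderiv ℝ f) p) p :=
    ((hf.fderiv_right (m := 1) (by norm_num)).differentiable (by norm_num) p).hasFDerivAt
  have h2 (w : ℝ × ℝ × ℝ) : HasFDerivAt (fun q => fderiv ℝ f q w)
      ((fderiv ℝ (fderiv ℝ f) p).flip w) p := by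
    have h3 := h1.clm_apply (hasFDerivAt_const w p)
    rw [ContinuousLinearMap.comp_zero, zero_add] at h3
    exact h3
  exact (h2 u).sub ((hC.differentiable (by norm_num) p).hasFDerivAt.mul (h2 v))

theorem comm_formula (A B : ℝ × ℝ × ℝ → ℝ) (hA : ContDiff ℝ 1 A) (hB : ContDiff ℝ 1 B)
    (f : ℝ × ℝ × ℝ → ℝ) (hf : ContDiff ℝ 2 f) (p : ℝ × ℝ × ℝ) :
      (Dt (fun q => Ds f q - B q * Dx f q) p -
          A p * Dx (fun q => Ds f q - B q * Dx f q) p) -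
        (Ds (fun q => Dt f q - A q * Dx f q) p -
          B p * Dx (fun q => Dt f q - A q * Dx f q) p) =
      (Ds A p - Dt B p + A p * Dx B p - B p * Dx A p) * Dx f p := by
  have df : Differentiable ℝ f := hf.differentiable (by norm_num)
  have dA := hA.differentiable (by norm_num) p
  have dB := hB.differentiable (by norm_num) p
  have e1 : (fun q => Ds f q - B q * Dx f q) =
      fun q => fderiv ℝ f q (0, 1, 0) - B q * fderiv ℝ f q (0, 0, 1) := by
    funext q; rw [Ds_eq (df q), Dx_eq (df q)]
  have e2 : (fun q => Dt f q - A q * Dx f q) =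
      fun q => fderiv ℝ f q (1, 0, 0) - A q * fderiv ℝ f q (0, 0, 1) := by
    funext q; rw [Dt_eq (df q), Dx_eq (df q)]
  have h1 := fderiv_op hB hf (0, 1, 0) (0, 0, 1) p
  have h2 := fderiv_op hA hf (1, 0, 0) (0, 0, 1) p
  have sym : IsSymmSndFDerivAt ℝ f p := hf.contDiffAt.isSymmSndFDerivAt (by simp)
  rw [e1, e2, Dt_eq h1.differentiableAt, Dx_eq h1.differentiableAt, Ds_eq h2.differentiableAt,
    Dx_eq h2.differentiableAt, h1.fderiv, h2.fderiv, Dx_eq (df p), Ds_eq dA, Dx_eq dA,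
    Dt_eq dB, Dx_eq dB]
  simp only [sub_apply, add_apply, smul_apply,
    ContinuousLinearMap.flip_apply, smul_eq_mul]
  rw [sym.eq (1, 0, 0) (0, 1, 0), sym.eq (1, 0, 0) (0, 0, 1), sym.eq (0, 1, 0) (0, 0, 1)]
  ring

theorem stmt_5 (A B : ℝ × ℝ × ℝ → ℝ) (hA : ContDiff ℝ 1 A) (hB : ContDiff ℝ 1 B)
    (f : ℝ × ℝ × ℝ → ℝ) (hf : ContDiff ℝ 2 f) :
    (∀ p : ℝ × ℝ × ℝ,
      (Dt (fun q => Ds f q - B q * Dx f q) p -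
          A p * Dx (fun q => Ds f q - B q * Dx f q) p) -
        (Ds (fun q => Dt f q - A q * Dx f q) p -
          B p * Dx (fun q => Dt f q - A q * Dx f q) p) =
      (Ds A p - Dt B p + A p * Dx B p - B p * Dx A p) * Dx f p) ∧
    ((∀ p : ℝ × ℝ × ℝ, Dt B p - Ds A p = A p * Dx B p - B p * Dx A p) →
      ∀ g : ℝ × ℝ × ℝ → ℝ, ContDiff ℝ 2 g →
        ∀ p : ℝ × ℝ × ℝ,
          Dt (fun q => Ds g q - B q * Dx g q) p -
              A p * Dx (fun q => Ds g q - B q * Dx g q) p =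
            Ds (fun q => Dt g q - A q * Dx g q) p -
              B p * Dx (fun q => Dt g q - A q * Dx g q) p) := by
  refine ⟨comm_formula A B hA hB f hf, fun h g hg p => ?_⟩
  have h1 := comm_formula A B hA hB g hg p
  have h2 : Ds A p - Dt B p + A p * Dx B p - B p * Dx A p = 0 := by linarith [h p]
  rw [h2, zero_mul] at h1
  exact sub_eq_zero.mp h1
end
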